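/- Let w, w_1, w_2 be words over Σ with w = w_1 w_2, ι(w_2) ≥ 1, and the rest of the arch factorisation of w_1 empty (r(w_1) = ε). Then a word v = v[1]⋯v[ι(w)+1] is a shortest absent subsequence of w if and only if v[1]⋯v[ι(w_1)+1] is a shortest absent subsequence of w_1 and v[ι(w_1)+1]⋯v[ι(w)+1] is a shortest absent subsequence of w_2. (Here ι(w) = ι(w_1) + ι(w_2).) -/

import Mathlib

/-!
Since every letter occurs in all the words involved, `ι(w)` is characterised by two facts: each word
of length at most `ι(w)` embeds in `w`, and some word of length `ι(w) + 1` does not. Hence the SASs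
of `w` are exactly the absent words of length `ι(w) + 1` (`isSAS_iff`).

For `ι(w₁w₂) = ι(w₁) + ι(w₂)`, the bound `≥` follows by splitting a word. For `≤`, let `m` be the
word formed by the last letters of the arches of `w₁`. Each of these letters occurs only at the end
of its arch, so any embedding of `m` in `w₁` uses `w₁` up completely; thus `m ++ t` embeds in
`w₁w₂` only if `t` embeds in `w₂` (`exists_modus`), and an absent word `t` of `w₂` gives an absent
word `m ++ t` of `w₁w₂`.

For the equivalence, any embedding of `v` in `w₁w₂` splits `v = a ++ b` with `a` in `w₁` and `b`
in `w₂`. If `|a| ≤ ι(w₁)` then `v[ι(w₁)+1]⋯` embeds in `w₂`, and otherwise `v[1]⋯v[ι(w₁)+1]` embeds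
in `w₁`. Conversely, an embedding of either factor extends to one of `v`, since the remaining part
of `v` has length `ι(w₂)`, respectively `ι(w₁)`.
-/

/-- `v` is a shortest absent subsequence (SAS) of `w`: `v` is a word over `alph(w)`
which is not a subsequence of `w`, of minimal length with this property. -/
def IsSAS {α : Type*} (w v : List α) : Prop :=
  (∀ a ∈ v, a ∈ w) ∧ ¬ v.Sublist w ∧
    ∀ u : List α, (∀ a ∈ u, a ∈ w) → ¬ u.Sublist w → v.length ≤ u.length

/-- The universality index `ι(w)`: the largest `k` such that every word of length at most `k`
over `alph(w)` is a subsequence of `w`. -/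
noncomputable def univIndex {α : Type*} (w : List α) : ℕ :=
  sSup {k | ∀ v : List α, (∀ a ∈ v, a ∈ w) → v.length ≤ k → v.Sublist w}

/-- The set whose supremum is `univIndex w` is bounded: powers of a letter longer than `w` are
absent. -/
theorem univ_bddAbove {α : Type*} [Nonempty α] {w : List α} (h : ∀ a : α, a ∈ w) :
    BddAbove {k | ∀ v : List α, (∀ a ∈ v, a ∈ w) → v.length ≤ k → v.Sublist w} := by
  obtain ⟨x⟩ := ‹Nonempty α›
  refine ⟨w.length, fun k hk => ?_⟩
  simpa using (hk (List.replicate k x) (fun a _ => h a) (by simp)).length_le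

theorem le_univIndex {α : Type*} [Nonempty α] {w : List α} (h : ∀ a : α, a ∈ w) {k : ℕ}
    (hk : ∀ v : List α, v.length ≤ k → v.Sublist w) : k ≤ univIndex w :=
  le_csSup (univ_bddAbove h) (fun v _ hv => hk v hv)

theorem sublist_of_length_le {α : Type*} [Nonempty α] {w : List α} (h : ∀ a : α, a ∈ w)
    {v : List α} (hv : v.length ≤ univIndex w) : v.Sublist w := by
  refine Nat.sSup_mem (s := {k | ∀ v : List α, (∀ a ∈ v, a ∈ w) → v.length ≤ k → v.Sublist w})
    ⟨0, fun v _ hv => ?_⟩ (univ_bddAbove h) v (fun a _ => h a) hv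
  simp [List.length_eq_zero_iff.mp (Nat.le_zero.mp hv)]

theorem exists_absent {α : Type*} [Nonempty α] {w : List α} (h : ∀ a : α, a ∈ w) :
    ∃ v : List α, v.length = univIndex w + 1 ∧ ¬ v.Sublist w := by
  by_contra! hc
  have := le_univIndex h (k := univIndex w + 1) (fun v hv => by
    rcases Nat.le_succ_iff.mp hv with hv | hv
    · exact sublist_of_length_le h hv
    · exact hc v hv)
  omega

theorem isSAS_iff {α : Type*} [Nonempty α] {w : List α} (h : ∀ a : α, a ∈ w) (v : List α) :
    IsSAS w v ↔ v.length = univIndex w + 1 ∧ ¬ v.Sublist w := by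
  constructor
  · rintro ⟨-, hv, hmin⟩
    obtain ⟨u, hu, hu'⟩ := exists_absent h
    have := hmin u (fun a _ => h a) hu'
    have : ¬ v.length ≤ univIndex w := fun hl => hv (sublist_of_length_le h hl)
    exact ⟨by omega, hv⟩
  · rintro ⟨hl, hv⟩
    refine ⟨fun a _ => h a, hv, fun u _ hu => ?_⟩
    have : ¬ u.length ≤ univIndex w := fun hl => hu (sublist_of_length_le h hl)
    omega

/-- If `w₁` is `k`-universal and `w₂` is `l`-universal, then `w₁w₂` is `(k + l)`-universal. -/
theorem universal_append {α : Type*} {w₁ w₂ : List α} {k l : ℕ}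
    (h₁ : ∀ v : List α, v.length ≤ k → v.Sublist w₁)
    (h₂ : ∀ v : List α, v.length ≤ l → v.Sublist w₂)
    (v : List α) (hv : v.length ≤ k + l) : v.Sublist (w₁ ++ w₂) := by
  rw [← List.take_append_drop k v]
  exact (h₁ _ (by simp)).append (h₂ _ (by simp; omega))

/-- A leading letter `x` can be matched in `p ++ x :: r` no earlier than the displayed `x`. -/
theorem sublist_of_cons_sublist {α : Type*} {x : α} {p t r : List α} (hx : x ∉ p)
    (h : (x :: t).Sublist (p ++ x :: r)) : t.Sublist r := by
  induction p with
  | nil => simpa using h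
  | cons y p ih =>
    simp only [List.mem_cons, not_or] at hx
    rw [List.cons_append] at h
    cases h with
    | cons _ h => exact ih hx.2 h
    | cons_cons _ h => exact absurd rfl hx.1

/-- A concatenation of `n` arches is `n`-universal, and the word `m` of their last letters
exhausts it. -/
theorem exists_modus {α : Type*} [DecidableEq α] [Nonempty α] (arches : List (List α))
    (hall : ∀ u ∈ arches, ∀ a : α, a ∈ u)
    (hlast : ∀ u ∈ arches, ∀ a : α, u.getLast? = some a → u.count a = 1) :
    (∀ v : List α, v.length ≤ arches.length → v.Sublist arches.flatten) ∧
      ∃ m : List α, m.length = arches.length ∧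
        ∀ t r : List α, (m ++ t).Sublist (arches.flatten ++ r) → t.Sublist r := by
  induction arches with
  | nil =>
    refine ⟨fun v hv => ?_, [], rfl, fun t r h => by simpa using h⟩
    simp [List.length_eq_zero_iff.mp (Nat.le_zero.mp hv)]
  | cons u us ih =>
    obtain ⟨huniv, m, hm, hmt⟩ := ih (fun u hu => hall u (List.mem_cons_of_mem _ hu))
      (fun u hu => hlast u (List.mem_cons_of_mem _ hu))
    have hu := hall u List.mem_cons_self
    have hul := hlast u List.mem_cons_self
    constructor
    · intro v hv
      rw [List.flatten_cons]
      refine universal_append (k := 1) (l := us.length) (fun v hv => ?_) huniv v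
        (by simpa [add_comm] using hv)
      match v, hv with
      | [], _ => simp
      | [a], _ => simpa using hu a
    · rcases List.eq_nil_or_concat u with rfl | ⟨p, x, rfl⟩
      · exact absurd (hu (Classical.arbitrary α)) (by simp)
      · have hx : x ∉ p := by
          have := hul x (by simp)
          simpa [List.count_eq_zero] using this
        refine ⟨x :: m, by simp [hm], fun t r h => hmt t r (sublist_of_cons_sublist hx ?_)⟩
        simpa using h

/-- Lemma 3.10: let `w = w₁w₂` with `alph(w₁) = alph(w₂) = Σ`, `ι(w₂) ≥ 1`, and the rest of
the arch factorisation of `w₁` empty (i.e. `w₁` is a concatenation of arches: 1-universal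
blocks whose last letter occurs exactly once in the block). Then `ι(w) = ι(w₁) + ι(w₂)`,
and a word `v = v[1]⋯v[ι(w)+1]` is an SAS of `w` iff `v[1]⋯v[ι(w₁)+1]` is an SAS of `w₁`
and `v[ι(w₁)+1]⋯v[ι(w)+1]` is an SAS of `w₂`. -/
theorem sas_of_concat {α : Type*} [DecidableEq α] [Nonempty α] (w₁ w₂ : List α)
    (h1 : ∀ a : α, a ∈ w₁) (h2 : ∀ a : α, a ∈ w₂)
    (hι2 : 1 ≤ univIndex w₂)
    (hrest : ∃ arches : List (List α),
        w₁ = arches.flatten ∧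
        (∀ u ∈ arches, ∀ a : α, a ∈ u) ∧
        (∀ u ∈ arches, ∀ a : α, u.getLast? = some a → u.count a = 1)) :
    univIndex (w₁ ++ w₂) = univIndex w₁ + univIndex w₂ ∧
      ∀ v : List α, v.length = univIndex (w₁ ++ w₂) + 1 →
        (IsSAS (w₁ ++ w₂) v ↔
          IsSAS w₁ (v.take (univIndex w₁ + 1)) ∧ IsSAS w₂ (v.drop (univIndex w₁))) := by
  have hw : ∀ a : α, a ∈ w₁ ++ w₂ := fun a => List.mem_append_left _ (h1 a)
  have s₁ : ∀ v : List α, v.length ≤ univIndex w₁ → v.Sublist w₁ :=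
    fun v hv => sublist_of_length_le h1 hv
  have s₂ : ∀ v : List α, v.length ≤ univIndex w₂ → v.Sublist w₂ :=
    fun v hv => sublist_of_length_le h2 hv
  have hidx : univIndex (w₁ ++ w₂) = univIndex w₁ + univIndex w₂ := by
    apply le_antisymm
    · obtain ⟨arches, rfl, hall, hlast⟩ := hrest
      obtain ⟨huniv, m, hm, hmt⟩ := exists_modus arches hall hlast
      obtain ⟨t, ht, htabs⟩ := exists_absent h2
      have hle := le_univIndex h1 huniv
      have hnot : ¬ (m ++ t).length ≤ univIndex (arches.flatten ++ w₂) :=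
        fun hl => htabs (hmt t w₂ (sublist_of_length_le hw hl))
      rw [List.length_append] at hnot
      omega
    · exact le_univIndex hw (universal_append s₁ s₂)
  refine ⟨hidx, fun v hv => ?_⟩
  rw [isSAS_iff hw, isSAS_iff h1, isSAS_iff h2]
  rw [hidx] at hv ⊢
  constructor
  · rintro ⟨-, habs⟩
    refine ⟨⟨by simp; omega, fun h => habs ?_⟩, by simp; omega, fun h => habs ?_⟩
    · rw [← List.take_append_drop (univIndex w₁ + 1) v]
      exact h.append (s₂ _ (by simp; omega))
    · rw [← List.take_append_drop (univIndex w₁) v]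
      exact (s₁ _ (by simp)).append h
  · rintro ⟨⟨-, habs₁⟩, -, habs₂⟩
    refine ⟨hv, fun h => ?_⟩
    obtain ⟨a, b, rfl, ha, hb⟩ := List.sublist_append_iff.mp h
    rcases Nat.lt_or_ge (univIndex w₁) a.length with hlt | hge
    · apply habs₁
      rw [List.take_append_of_le_length hlt]
      exact (List.take_sublist _ _).trans ha
    · apply habs₂
      rw [List.drop_append, List.drop_eq_nil_of_le hge, List.nil_append]
      exact (List.drop_sublist _ _).trans hb
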